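/- Let d ≥ 1 be an integer, p > 1 a real number, and let U : ℝ^d → ℝ be a positive Schwartz function satisfying ΔU + U^p − U = 0 pointwise on ℝ^d. Then d(p−1) ∫_{ℝ^d} U² dx = (p(2−d) + 2 + d) ∫_{ℝ^d} |∇U|² dx; equivalently, if ∫|∇U|² ≠ 0 then ∫U² / ∫|∇U|² = (p(2−d)+2+d)/(d(p−1)). -/

import Mathlib

open MeasureTheory Real Filter Topology Asymptotics

/-- Partial derivative of `f` in the `j`-th coordinate direction. -/
noncomputable def pd {d : ℕ} {E : Type*} [NormedAddCommGroup E] [NormedSpace ℝ E]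
    (f : EuclideanSpace ℝ (Fin d) → E) (j : Fin d) (x : EuclideanSpace ℝ (Fin d)) : E :=
  fderiv ℝ f x (EuclideanSpace.single j 1)

/-- Euclidean Laplacian: sum of second partial derivatives. -/
noncomputable def lap {d : ℕ} {E : Type*} [NormedAddCommGroup E] [NormedSpace ℝ E]
    (f : EuclideanSpace ℝ (Fin d) → E) (x : EuclideanSpace ℝ (Fin d)) : E :=
  ∑ j, pd (pd f j) j x

/-!
The identity comes from testing the equation `U - ΔU = φ(U)` against `U` and against its image
`A U = x · ∇U` under the Euler operator. Everything needed about `A` on the Schwartz space of an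
`n`-dimensional space is algebraic: `Aᵀ = -A - n` and `[Δ, A] = 2Δ`. Since `Δ` is symmetric, these
give `2 ∫ (A U) ΔU = (2 - n) ∫ U ΔU = (n - 2) ∫ |∇U|²`. When `t φ'(t) = p φ(t)` the chain rule gives
`U A(φ(U)) = p (A U) φ(U)`, whence `(p + 1) ∫ (A U) φ(U) = -n ∫ U φ(U)`. Since `φ(U) = U - ΔU` is
itself a Schwartz function, no regularity of `φ(U)` has to be established separately.
-/

section EulerOperator

open scoped LineDeriv SchwartzMap

variable {D F F₁ F₂ V : Type*} [NormedAddCommGroup D] [NormedSpace ℝ D]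
  [NormedAddCommGroup F] [NormedSpace ℝ F] [NormedAddCommGroup F₁] [NormedSpace ℝ F₁]
  [NormedAddCommGroup F₂] [NormedSpace ℝ F₂] [NormedAddCommGroup V] [NormedSpace ℝ V]

variable (D F) in
/-- The Euler operator `f ↦ x · ∇f`, the generator of dilations, acting on Schwartz functions.
It is encoded as the derivative of `f` paired with the identity, which has temperate growth. -/
noncomputable def eulerCLM : 𝓢(D, F) →L[ℝ] 𝓢(D, F) :=
  SchwartzMap.bilinLeftCLM (.id ℝ (D →L[ℝ] F)) .id ∘L SchwartzMap.fderivCLM ℝ D F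

theorem eulerCLM_apply (f : 𝓢(D, F)) (x : D) : eulerCLM D F f x = fderiv ℝ f x x := rfl

theorem eulerCLM_apply_of_comp {φ : ℝ → ℝ} (hφ : Differentiable ℝ φ) {f g : 𝓢(D, ℝ)}
    (hg : ∀ x, g x = φ (f x)) (x : D) :
    eulerCLM D ℝ g x = deriv φ (f x) * eulerCLM D ℝ f x := by
  have h := (hφ (f x)).hasDerivAt.comp_hasFDerivAt x (f.hasFDerivAt x)
  rw [eulerCLM_apply, show ⇑g = φ ∘ f from funext hg, h.fderiv]
  rfl

theorem eulerCLM_pairing (B : F₁ →L[ℝ] F₂ →L[ℝ] V) (f : 𝓢(D, F₁)) (g : 𝓢(D, F₂)) :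
    eulerCLM D V (SchwartzMap.pairing B f g) =
      SchwartzMap.pairing B f (eulerCLM D F₂ g) + SchwartzMap.pairing B (eulerCLM D F₁ f) g := by
  ext x
  have h := B.hasFDerivAt_of_bilinear (f.hasFDerivAt x) (g.hasFDerivAt x)
  rw [eulerCLM_apply, SchwartzMap.pairing_apply, h.fderiv]
  rfl

theorem lineDerivOp_eulerCLM (f : 𝓢(D, F)) (v : D) :
    ∂_{v} (eulerCLM D F f) = eulerCLM D F (∂_{v} f) + ∂_{v} f := by
  ext x
  have hf : DifferentiableAt ℝ (fderiv ℝ f) x :=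
    (SchwartzMap.fderivCLM ℝ D F f).differentiableAt
  have hsymm := (f.smooth 2).contDiffAt.isSymmSndFDerivAt (x := x) (by simp)
  have hleft : ∂_{v} (eulerCLM D F f) x = fderiv ℝ (fderiv ℝ f) x v x + fderiv ℝ f x v := by
    change fderiv ℝ (fun y ↦ fderiv ℝ f y y) x v = _
    rw [fderiv_clm_apply hf differentiableAt_fun_id]
    simp [add_comm]
  have hright : eulerCLM D F (∂_{v} f) x = fderiv ℝ (fderiv ℝ f) x x v := by
    change fderiv ℝ (fun y ↦ fderiv ℝ f y v) x x = _
    rw [fderiv_clm_apply hf (differentiableAt_const v)]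
    simp
  rw [hleft, hsymm.eq v x, add_apply, hright, SchwartzMap.lineDerivOp_apply_eq_fderiv]

variable [MeasurableSpace D] [BorelSpace D] {μ : Measure D}

section Integrable

variable [SecondCountableTopology D] [μ.HasTemperateGrowth]

theorem integrable_clm_smul_schwartzMap (ℓ : D →L[ℝ] ℝ) (f : 𝓢(D, F)) :
    Integrable (fun x ↦ ℓ x • f x) μ := by
  simpa only [SchwartzMap.smulLeftCLM_apply ℓ.hasTemperateGrowth] using
    (SchwartzMap.smulLeftCLM F ℓ f).integrable (μ := μ)

theorem integrable_bilinear_schwartzMap (B : F₁ →L[ℝ] F₂ →L[ℝ] V)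
    (f : 𝓢(D, F₁)) (g : 𝓢(D, F₂)) : Integrable (fun x ↦ B (f x) (g x)) μ :=
  (SchwartzMap.pairing B f g).integrable

theorem integrable_mul_schwartzMap (f g : 𝓢(D, ℝ)) : Integrable (fun x ↦ f x * g x) μ :=
  integrable_bilinear_schwartzMap (.mul ℝ ℝ) f g

end Integrable

variable [FiniteDimensional ℝ D] [μ.IsAddHaarMeasure]

theorem integral_clm_smul_lineDerivOp (ℓ : D →L[ℝ] ℝ) (f : 𝓢(D, F)) (v : D) :
    ∫ x, ℓ x • ∂_{v} f x ∂μ = -(ℓ v • ∫ x, f x ∂μ) := by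
  have hconst : Integrable (fun x ↦ fderiv ℝ ℓ x v • f x) μ := by
    simpa only [ℓ.fderiv] using f.integrable.fun_smul (ℓ v)
  simp only [SchwartzMap.lineDerivOp_apply_eq_fderiv]
  rw [integral_smul_fderiv_eq_neg_fderiv_smul_of_integrable hconst
    (integrable_clm_smul_schwartzMap ℓ (∂_{v} f)) (integrable_clm_smul_schwartzMap ℓ f)
    (fun _ _ ↦ ℓ.differentiableAt) (fun _ _ ↦ f.differentiableAt)]
  simp only [ℓ.fderiv, integral_smul]

theorem integral_eulerCLM (f : 𝓢(D, F)) :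
    ∫ x, eulerCLM D F f x ∂μ = -((Module.finrank ℝ D : ℝ) • ∫ x, f x ∂μ) := by
  let b := Module.finBasis ℝ D
  let ℓ i : D →L[ℝ] ℝ := (b.coord i).toContinuousLinearMap
  have expand (x : D) : eulerCLM D F f x = ∑ i, ℓ i x • ∂_{b i} f x := by
    simp only [eulerCLM_apply, SchwartzMap.lineDerivOp_apply_eq_fderiv, ← map_smul, ← map_sum]
    exact congrArg _ (b.sum_repr x).symm
  have hdual i : ℓ i (b i) = 1 := by simp [ℓ]
  simp only [expand]
  rw [integral_finsetSum _ fun i _ ↦ integrable_clm_smul_schwartzMap (ℓ i) (∂_{b i} f)]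
  simp only [integral_clm_smul_lineDerivOp, hdual, one_smul, Finset.sum_const,
    Finset.card_univ, Fintype.card_fin, smul_neg, Nat.cast_smul_eq_nsmul]

theorem integral_bilinear_eulerCLM_right (B : F₁ →L[ℝ] F₂ →L[ℝ] V)
    (f : 𝓢(D, F₁)) (g : 𝓢(D, F₂)) :
    ∫ x, B (f x) (eulerCLM D F₂ g x) ∂μ =
      -∫ x, B (eulerCLM D F₁ f x) (g x) ∂μ
        - (Module.finrank ℝ D : ℝ) • ∫ x, B (f x) (g x) ∂μ := by
  have h := integral_eulerCLM (μ := μ) (SchwartzMap.pairing B f g)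
  simp only [eulerCLM_pairing, add_apply, SchwartzMap.pairing_apply_apply] at h
  rw [integral_add (integrable_bilinear_schwartzMap B f _)
    (integrable_bilinear_schwartzMap B _ g)] at h
  rw [eq_sub_of_add_eq h]
  abel

theorem integral_mul_eulerCLM_right (f g : 𝓢(D, ℝ)) :
    ∫ x, f x * eulerCLM D ℝ g x ∂μ =
      -∫ x, eulerCLM D ℝ f x * g x ∂μ - Module.finrank ℝ D * ∫ x, f x * g x ∂μ :=
  integral_bilinear_eulerCLM_right (.mul ℝ ℝ) f g

theorem integral_eulerCLM_mul_self (f : 𝓢(D, ℝ)) :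
    2 * ∫ x, eulerCLM D ℝ f x * f x ∂μ = -Module.finrank ℝ D * ∫ x, f x ^ 2 ∂μ := by
  have h := integral_mul_eulerCLM_right (μ := μ) f f
  simp only [mul_comm (f _) (eulerCLM D ℝ f _), ← pow_two] at h
  linarith

theorem integral_eulerCLM_mul_of_homogeneous {φ : ℝ → ℝ} {p : ℝ} (hφ : Differentiable ℝ φ)
    (hφ_euler : ∀ t, t * deriv φ t = p * φ t) {f g : 𝓢(D, ℝ)} (hg : ∀ x, g x = φ (f x)) :
    (p + 1) * ∫ x, eulerCLM D ℝ f x * g x ∂μ = -Module.finrank ℝ D * ∫ x, f x * g x ∂μ := by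
  have hderiv (x : D) : f x * eulerCLM D ℝ g x = p * (eulerCLM D ℝ f x * g x) := by
    rw [eulerCLM_apply_of_comp hφ hg, hg]
    linear_combination eulerCLM D ℝ f x * hφ_euler (f x)
  have h := integral_mul_eulerCLM_right (μ := μ) f g
  simp only [hderiv, integral_const_mul] at h
  linarith

end EulerOperator

section Laplacian

open scoped LineDeriv SchwartzMap Laplacian Gradient

variable {E F V : Type*} [NormedAddCommGroup E] [InnerProductSpace ℝ E] [FiniteDimensional ℝ E]
  [NormedAddCommGroup F] [NormedSpace ℝ F] [NormedAddCommGroup V] [NormedSpace ℝ V]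

theorem laplacian_eulerCLM (f : 𝓢(E, F)) :
    Δ (eulerCLM E F f) = eulerCLM E F (Δ f) + (2 : ℝ) • Δ f := by
  simp only [SchwartzMap.laplacian_eq_sum (stdOrthonormalBasis ℝ E), lineDerivOp_eulerCLM,
    LineDeriv.lineDerivOp_add, map_sum, Finset.sum_add_distrib]
  module

variable [MeasurableSpace E] [BorelSpace E] {μ : Measure E} [μ.IsAddHaarMeasure]

theorem integral_bilinear_eulerCLM_laplacian {B : F →L[ℝ] F →L[ℝ] V}
    (hB : ∀ u v, B u v = B v u) (f : 𝓢(E, F)) :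
    (2 : ℝ) • ∫ x, B (eulerCLM E F f x) (Δ f x) ∂μ =
      (2 - Module.finrank ℝ E : ℝ) • ∫ x, B (f x) (Δ f x) ∂μ := by
  have h := SchwartzMap.integral_bilinear_laplacian_right_eq_left (μ := μ) f (eulerCLM E F f) B
  simp only [laplacian_eulerCLM, add_apply, smul_apply, map_add,
    map_smul, hB (Δ f _) (eulerCLM E F f _)] at h
  rw [integral_add (integrable_bilinear_schwartzMap B f _)
    ((integrable_bilinear_schwartzMap B f (Δ f)).fun_smul (2 : ℝ)), integral_smul,
    integral_bilinear_eulerCLM_right] at h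
  linear_combination (norm := module) -h

theorem integral_mul_laplacian_eq_neg_integral_inner_gradient (f g : 𝓢(E, ℝ)) :
    ∫ x, f x * Δ g x ∂μ = -∫ x, inner ℝ (∇ f x) (∇ g x) ∂μ := by
  let b := stdOrthonormalBasis ℝ E
  have hinner (x : E) : inner ℝ (∇ f x) (∇ g x) = ∑ i, ∂_{b i} f x * ∂_{b i} g x := by
    rw [← b.sum_inner_mul_inner]
    simp only [real_inner_comm (∇ g x), inner_gradient_left,
      SchwartzMap.lineDerivOp_apply_eq_fderiv]
  simp only [SchwartzMap.laplacian_eq_sum b, _root_.sum_apply, hinner, Finset.mul_sum]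
  rw [integral_finsetSum _ fun _ _ ↦ integrable_mul_schwartzMap _ _,
    integral_finsetSum _ fun _ _ ↦ integrable_mul_schwartzMap _ _]
  simp only [SchwartzMap.integral_mul_lineDerivOp_right_eq_neg_left, Finset.sum_neg_distrib]

theorem integral_mul_laplacian_self (f : 𝓢(E, ℝ)) :
    ∫ x, f x * Δ f x ∂μ = -∫ x, ‖∇ f x‖ ^ 2 ∂μ := by
  simp only [integral_mul_laplacian_eq_neg_integral_inner_gradient, real_inner_self_eq_norm_sq]

theorem integral_eulerCLM_mul_laplacian (f : 𝓢(E, ℝ)) :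
    2 * ∫ x, eulerCLM E ℝ f x * Δ f x ∂μ =
      (Module.finrank ℝ E - 2) * ∫ x, ‖∇ f x‖ ^ 2 ∂μ := by
  have h : 2 * ∫ x, eulerCLM E ℝ f x * Δ f x ∂μ =
      (2 - Module.finrank ℝ E) * ∫ x, f x * Δ f x ∂μ :=
    integral_bilinear_eulerCLM_laplacian (B := .mul ℝ ℝ) mul_comm f
  rw [h, integral_mul_laplacian_self]
  ring

theorem pohozaev_identity {φ : ℝ → ℝ} {p : ℝ} (hφ : Differentiable ℝ φ)
    (hφ_euler : ∀ t, t * deriv φ t = p * φ t) {U : 𝓢(E, ℝ)}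
    (hU : ∀ x, Δ U x + φ (U x) - U x = 0) :
    Module.finrank ℝ E * (p - 1) * ∫ x, U x ^ 2 ∂μ =
      (p * (2 - Module.finrank ℝ E) + 2 + Module.finrank ℝ E) * ∫ x, ‖∇ U x‖ ^ 2 ∂μ := by
  have split (f : 𝓢(E, ℝ)) :
      ∫ x, f x * (U - Δ U) x ∂μ = ∫ x, f x * U x ∂μ - ∫ x, f x * Δ U x ∂μ := by
    simp only [sub_apply, mul_sub]
    exact integral_sub (integrable_mul_schwartzMap f U) (integrable_mul_schwartzMap f (Δ U))
  have hφU (x : E) : (U - Δ U) x = φ (U x) := by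
    rw [sub_apply]
    linarith [hU x]
  have energy := split U
  simp only [integral_mul_laplacian_self, ← pow_two] at energy
  have dilation := integral_eulerCLM_mul_of_homogeneous (μ := μ) hφ hφ_euler hφU
  rw [split, energy] at dilation
  linear_combination -2 * dilation + (p + 1) * integral_eulerCLM_mul_self (μ := μ) U
    - (p + 1) * integral_eulerCLM_mul_laplacian (μ := μ) U

theorem pohozaev_ratio_general {φ : ℝ → ℝ} {p : ℝ} (hp : 1 < p) (hφ : Differentiable ℝ φ)
    (hφ_euler : ∀ t, t * deriv φ t = p * φ t) (U : 𝓢(E, ℝ))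
    (hU : ∀ x, Δ U x + φ (U x) - U x = 0) :
    Module.finrank ℝ E * (p - 1) * ∫ x, U x ^ 2 ∂μ =
      (p * (2 - Module.finrank ℝ E) + 2 + Module.finrank ℝ E) * ∫ x, ‖∇ U x‖ ^ 2 ∂μ ∧
    (∫ x, ‖∇ U x‖ ^ 2 ∂μ ≠ 0 →
      (∫ x, U x ^ 2 ∂μ) / (∫ x, ‖∇ U x‖ ^ 2 ∂μ) =
        (p * (2 - Module.finrank ℝ E) + 2 + Module.finrank ℝ E) /
          (Module.finrank ℝ E * (p - 1))) := by
  have key := pohozaev_identity (μ := μ) hφ hφ_euler hU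
  refine ⟨key, fun hgrad ↦ ?_⟩
  have hdim : (Module.finrank ℝ E : ℝ) ≠ 0 := by
    intro hzero
    rw [hzero] at key
    have hpos : 0 < 2 * p + 2 := by linarith
    exact mul_ne_zero hpos.ne' hgrad (by linear_combination -key)
  rw [div_eq_div_iff hgrad (mul_ne_zero hdim (sub_pos.2 hp).ne')]
  linarith

end Laplacian

section EuclideanSpace

open scoped SchwartzMap Laplacian Gradient

variable {d : ℕ}

theorem lap_eq_laplacian {F : Type*} [NormedAddCommGroup F] [NormedSpace ℝ F]
    (f : 𝓢(EuclideanSpace ℝ (Fin d), F)) (x : EuclideanSpace ℝ (Fin d)) :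
    lap f x = Δ f x := by
  rw [SchwartzMap.laplacian_eq_sum (EuclideanSpace.basisFun (Fin d) ℝ), sum_apply]
  simp only [EuclideanSpace.basisFun_apply]
  rfl

theorem sum_pd_sq_eq_norm_gradient_sq (f : EuclideanSpace ℝ (Fin d) → ℝ)
    (x : EuclideanSpace ℝ (Fin d)) : ∑ j, pd f j x ^ 2 = ‖∇ f x‖ ^ 2 := by
  simp only [← (EuclideanSpace.basisFun (Fin d) ℝ).sum_sq_norm_inner_left, inner_gradient_left,
    EuclideanSpace.basisFun_apply, norm_eq_abs, sq_abs, pd]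

end EuclideanSpace

theorem mul_deriv_rpow_const (p t : ℝ) : t * deriv (fun s : ℝ ↦ s ^ p) t = p * t ^ p := by
  rw [Real.deriv_rpow_const]
  obtain rfl | ht := eq_or_ne t 0
  · obtain rfl | hp := eq_or_ne p 0
    · simp
    · simp [zero_rpow hp]
  · rw [rpow_sub_one ht]
    field_simp

/-- Pohozaev-identity consequence
`d(p−1) ∫U² = (p(2−d)+2+d) ∫|∇U|²` for Schwartz ground states. -/
theorem pohozaev_ratio (d : ℕ) (hd : 1 ≤ d) (p : ℝ) (hp : 1 < p)
    (U : SchwartzMap (EuclideanSpace ℝ (Fin d)) ℝ)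
    (hUpos : ∀ x, 0 < U x)
    (hUeq : ∀ x, lap (⇑U) x + U x ^ p - U x = 0) :
    (d : ℝ) * (p - 1) * ∫ x, (U x) ^ 2
      = (p * (2 - (d : ℝ)) + 2 + (d : ℝ)) * ∫ x, ∑ j, (pd (⇑U) j x) ^ 2 ∧
    ((∫ x, ∑ j, (pd (⇑U) j x) ^ 2) ≠ 0 →
      (∫ x, (U x) ^ 2) / (∫ x, ∑ j, (pd (⇑U) j x) ^ 2)
        = (p * (2 - (d : ℝ)) + 2 + (d : ℝ)) / ((d : ℝ) * (p - 1))) := by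
  simpa only [finrank_euclideanSpace_fin, sum_pd_sq_eq_norm_gradient_sq] using
    pohozaev_ratio_general hp (differentiable_rpow_const hp.le) (mul_deriv_rpow_const p) U
      fun x ↦ lap_eq_laplacian U x ▸ hUeq x
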